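/- arXiv:0709.0252 — 2 statements merged into one kernel-verified Lean document; each statement's English description precedes it below -/
import Mathlib

section
/- Let B_n(x) be the Bell polynomials and fix x > 0. For each n ≥ 1 let w_n = LW₀(n/x). Then B_n(x) is asymptotically equal to exp(n/w_n + n·ln(n/w_n) − (x + n))·(w_n + 1)^{−1/2} as n → ∞; that is, B_n(x)·exp(x + n − n/w_n)·(w_n/n)^n·√(w_n + 1) → 1 as n → ∞. -/
/-- The Bell polynomials, defined by `B₀ = 1` and `B_{n+1} = X * (Bₙ' + Bₙ)`. -/
noncomputable def Bell : ℕ → Polynomial ℝ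
  | 0 => 1
  | n + 1 => Polynomial.X * (Polynomial.derivative (Bell n) + Bell n)

/-- The principal branch of the Lambert W function on the nonnegative reals:
for `z ≥ 0`, `LW0 z` is the unique `w ≥ 0` with `w·exp w = z`. -/
noncomputable def LW0 (z : ℝ) : ℝ :=
  Function.invFunOn (fun w => w * Real.exp w) (Set.Ici 0) z

/-!
The generating function `exp (x * (exp z - 1))` of the numbers `Bₙ(x) / n!` is entire, so Cauchy's
formula on the circle of radius `w` expresses `Bₙ(x)` as an integral over `θ ∈ [-π, π]`. The radius
`w = LW₀(n / x)` makes `θ = 0` a saddle point: with `a = x * exp w = n / w` the logarithm of the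
normalised integrand is `-a * w * (w + 1) * θ ^ 2 / 2` up to a cubic error. After the substitution
`θ = t / √(a * w * (w + 1))` the integrand converges to `exp (-t ^ 2 / 2)` and is dominated by a
multiple of `1 / (1 + t ^ 2)`, so the integral tends to `√(2 * π)`; Stirling's formula for `n!`
does the rest.
-/

section SaddlePoint

open Filter MeasureTheory Metric Set
open scoped Nat Real Topology

section LambertW

theorem exists_nonneg_mul_exp_eq {z : ℝ} (hz : 0 ≤ z) :
    ∃ w ∈ Ici (0 : ℝ), w * Real.exp w = z := by
  have hcont : ContinuousOn (fun w : ℝ => w * Real.exp w) (Icc 0 z) := by fun_prop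
  have hmem : z ∈ Icc (0 * Real.exp 0) (z * Real.exp z) :=
    ⟨by simpa using hz, le_mul_of_one_le_right hz (Real.one_le_exp hz)⟩
  obtain ⟨w, hw, hwz⟩ := intermediate_value_Icc hz hcont hmem
  exact ⟨w, hw.1, hwz⟩

theorem LW0_nonneg {z : ℝ} (hz : 0 ≤ z) : 0 ≤ LW0 z :=
  Function.invFunOn_mem (exists_nonneg_mul_exp_eq hz)

theorem LW0_mul_exp_LW0 {z : ℝ} (hz : 0 ≤ z) : LW0 z * Real.exp (LW0 z) = z :=
  Function.invFunOn_eq (exists_nonneg_mul_exp_eq hz)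

theorem LW0_pos {z : ℝ} (hz : 0 < z) : 0 < LW0 z := by
  refine (LW0_nonneg hz.le).lt_of_ne fun h0 => hz.ne ?_
  rw [← LW0_mul_exp_LW0 hz.le, ← h0, zero_mul]

theorem tendsto_LW0_atTop : Tendsto LW0 atTop atTop := by
  refine tendsto_atTop.2 fun M => ?_
  filter_upwards [eventually_gt_atTop (|M| * Real.exp |M|), eventually_ge_atTop 0] with z hz hz0
  by_contra! hlt
  have hle : LW0 z ≤ |M| := hlt.le.trans (le_abs_self M)
  have hz' : LW0 z * Real.exp (LW0 z) ≤ |M| * Real.exp |M| := by gcongr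
  exact hz.not_ge ((LW0_mul_exp_LW0 hz0).symm.trans_le hz')

theorem tendsto_mul_exp_div_add_one_pow_atTop (k : ℕ) :
    Tendsto (fun w : ℝ => w * Real.exp w / (w + 1) ^ k) atTop atTop := by
  have hexp : Tendsto (fun w : ℝ => Real.exp (w + 1) / (w + 1) ^ k / Real.exp 1) atTop atTop :=
    ((Real.tendsto_exp_div_pow_atTop k).comp
      (tendsto_atTop_add_const_right _ 1 tendsto_id)).atTop_div_const (Real.exp_pos 1)
  refine tendsto_atTop_mono' _ ?_ hexp
  filter_upwards [eventually_ge_atTop 1] with w hw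
  rw [div_right_comm, ← Real.exp_sub, add_sub_cancel_right]
  gcongr
  exact le_mul_of_one_le_left (Real.exp_pos w).le hw

theorem tendsto_div_LW0_add_one_pow_atTop (k : ℕ) :
    Tendsto (fun z : ℝ => z / (LW0 z + 1) ^ k) atTop atTop := by
  refine ((tendsto_mul_exp_div_add_one_pow_atTop k).comp tendsto_LW0_atTop).congr' ?_
  filter_upwards [eventually_ge_atTop 0] with z hz
  rw [Function.comp_apply, LW0_mul_exp_LW0 hz]

theorem tendsto_natCast_div_LW0_add_one_pow_atTop {x : ℝ} (hx : 0 < x) (k : ℕ) :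
    Tendsto (fun n : ℕ => n / (LW0 (n / x) + 1) ^ k) atTop atTop := by
  have hz : Tendsto (fun n : ℕ => n / x) atTop atTop :=
    tendsto_natCast_atTop_atTop.atTop_div_const hx
  refine (((tendsto_div_LW0_add_one_pow_atTop k).comp hz).const_mul_atTop hx).congr fun n => ?_
  rw [Function.comp_apply, mul_div_assoc', mul_div_cancel₀ _ hx.ne']

end LambertW

section CauchyFormula

variable {E : Type*} [NormedAddCommGroup E] [NormedSpace ℂ E]

theorem circleIntegral_eq_integral_neg_pi_pi (f : ℂ → E) (c : ℂ) (R : ℝ) :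
    (∮ z in C(c, R), f z) = ∫ θ in -π..π, deriv (circleMap c R) θ • f (circleMap c R θ) := by
  have hper : Function.Periodic (fun θ => deriv (circleMap c R) θ • f (circleMap c R θ))
      (2 * π) := fun θ => by
    simp only [deriv_circleMap, periodic_circleMap _ _ θ]
  rw [circleIntegral]
  simpa [two_mul] using hper.intervalIntegral_add_eq 0 (-π)

theorem iteratedDeriv_eq_integral_circleMap [CompleteSpace E] {f : ℂ → E} {c : ℂ} {R : ℝ}
    (hR : 0 < R) (n : ℕ) (hf : DiffContOnCl ℂ f (ball c R)) :
    iteratedDeriv n f c = (n ! / (2 * π * R ^ n) : ℂ) •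
      ∫ θ in -π..π, Complex.exp (-(n * θ * Complex.I)) • f (circleMap c R θ) := by
  have hcauchy := hf.circleIntegral_one_div_sub_center_pow_smul hR n
  have hR' : (R : ℂ) ≠ 0 := by exact_mod_cast hR.ne'
  have hintegrand (θ : ℝ) : deriv (circleMap c R) θ •
      (1 / (circleMap c R θ - c) ^ (n + 1)) • f (circleMap c R θ) =
      (Complex.I / R ^ n) • Complex.exp (-(n * θ * Complex.I)) • f (circleMap c R θ) := by
    have hexp := Complex.exp_ne_zero (θ * Complex.I)
    have hpow : Complex.exp (-(n * θ * Complex.I)) = (Complex.exp (θ * Complex.I) ^ n)⁻¹ := by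
      rw [← Complex.exp_nat_mul, ← Complex.exp_neg, mul_assoc]
    simp only [smul_smul, deriv_circleMap, circleMap_sub_center, circleMap_zero, hpow]
    congr 1
    field_simp
    ring
  simp only [circleIntegral_eq_integral_neg_pi_pi, hintegrand, intervalIntegral.integral_smul]
    at hcauchy
  have hfac : (n ! : ℂ) ≠ 0 := by exact_mod_cast n.factorial_ne_zero
  have hpi : (π : ℂ) ≠ 0 := by exact_mod_cast Real.pi_ne_zero
  rw [← inv_smul_eq_iff₀ (by simp [hfac, hpi]), smul_smul] at hcauchy
  rw [← hcauchy]
  congr 1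
  field_simp

theorem iteratedDeriv_exp_mul_exp_sub_one (x : ℂ) (n : ℕ) :
    iteratedDeriv n (fun z => Complex.exp (x * (Complex.exp z - 1))) = fun z =>
      (Bell n).aeval (x * Complex.exp z) * Complex.exp (x * (Complex.exp z - 1)) := by
  induction n with
  | zero => simp [Bell]
  | succ n ih =>
    rw [iteratedDeriv_succ, ih]
    ext z
    have hinner : HasDerivAt (fun z => x * Complex.exp z) (x * Complex.exp z) z :=
      (Complex.hasDerivAt_exp z).const_mul x
    have hgen : HasDerivAt (fun z => Complex.exp (x * (Complex.exp z - 1)))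
        (Complex.exp (x * (Complex.exp z - 1)) * (x * Complex.exp z)) z :=
      (((Complex.hasDerivAt_exp z).sub_const 1).const_mul x).cexp
    have hbell := ((Bell n).hasDerivAt_aeval (x * Complex.exp z)).comp z hinner
    refine (hbell.mul hgen).deriv.trans ?_
    simp only [Bell, map_mul, map_add, Polynomial.aeval_X, Function.comp_apply]
    ring

theorem aeval_Bell_eq_integral (x : ℂ) (n : ℕ) {w : ℝ} (hw : 0 < w) :
    (Bell n).aeval x = n ! / (2 * π * w ^ n) * ∫ θ in -π..π, Complex.exp (-(n * θ * Complex.I)) *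
      Complex.exp (x * (Complex.exp (w * Complex.exp (θ * Complex.I)) - 1)) := by
  have hdiff : Differentiable ℂ fun z => Complex.exp (x * (Complex.exp z - 1)) := by fun_prop
  simpa [iteratedDeriv_exp_mul_exp_sub_one, circleMap] using
    iteratedDeriv_eq_integral_circleMap hw n (hdiff.diffContOnCl (s := ball 0 w))

end CauchyFormula

/-- The logarithm of Cauchy's integrand for `exp (x * (exp z - 1))` on the circle of radius `w`,
normalised to vanish at the saddle point `θ = 0`. The parameter `a` stands for `x * exp w`, and
`a * w` for the index `n` of the coefficient. -/
noncomputable def saddlePhase (a w θ : ℝ) : ℂ :=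
  a * (Complex.exp (w * (Complex.exp (θ * Complex.I) - 1)) - 1) - a * w * θ * Complex.I

/-- The reciprocal of the standard deviation of the Gaussian that approximates
`exp (saddlePhase a w θ)` near `θ = 0`. -/
noncomputable def saddleScale (a w : ℝ) : ℝ :=
  √(a * w * (w + 1))

section PhaseBounds

variable {a w θ : ℝ}

theorem saddleScale_sq (ha : 0 ≤ a) (hw : 0 ≤ w) : saddleScale a w ^ 2 = a * w * (w + 1) :=
  Real.sq_sqrt (by positivity)

theorem saddleScale_pos (ha : 0 < a) (hw : 0 < w) : 0 < saddleScale a w :=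
  Real.sqrt_pos.2 (by positivity)

theorem continuous_saddlePhase (a w : ℝ) : Continuous (saddlePhase a w) := by
  unfold saddlePhase
  fun_prop

theorem saddlePhase_mul_exp (x w θ : ℝ) : saddlePhase (x * Real.exp w) w θ =
    x * (Complex.exp (w * Complex.exp (θ * Complex.I)) - 1) - (x * Complex.exp w - x) -
      x * Complex.exp w * w * θ * Complex.I := by
  have hexp : Complex.exp w * Complex.exp (w * (Complex.exp (θ * Complex.I) - 1)) =
      Complex.exp (w * Complex.exp (θ * Complex.I)) := by
    rw [← Complex.exp_add]
    ring_nf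
  rw [saddlePhase]
  push_cast
  linear_combination (x : ℂ) * hexp

theorem Bell_eval_eq_integral_saddlePhase {x : ℝ} {n : ℕ} (hw : 0 < w)
    (hn : x * Real.exp w * w = n) :
    (Bell n).eval x = n ! / (2 * π * w ^ n) * Real.exp (x * Real.exp w - x) *
      (∫ θ in -π..π, Complex.exp (saddlePhase (x * Real.exp w) w θ)).re := by
  have hn' : (x : ℂ) * Complex.exp w * w = n := by exact_mod_cast hn
  have hintegrand (θ : ℝ) : Complex.exp (-(n * θ * Complex.I)) *
      Complex.exp (x * (Complex.exp (w * Complex.exp (θ * Complex.I)) - 1)) =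
      Complex.exp (x * Complex.exp w - x) *
        Complex.exp (saddlePhase (x * Real.exp w) w θ) := by
    rw [saddlePhase_mul_exp, hn', ← Complex.exp_add, ← Complex.exp_add]
    ring_nf
  have hcast : (Bell n).aeval (x : ℂ) = ((Bell n).eval x : ℝ) :=
    Polynomial.aeval_algebraMap_apply_eq_algebraMap_eval x (Bell n)
  have hcauchy := aeval_Bell_eq_integral x n hw
  simp only [hcast, hintegrand, intervalIntegral.integral_const_mul] at hcauchy
  rw [← Complex.re_ofReal_mul, ← Complex.ofReal_re ((Bell n).eval x), hcauchy, ← mul_assoc]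
  push_cast
  rfl

theorem norm_exp_sub_quadratic_le {z : ℂ} (hz : ‖z‖ ≤ 1) :
    ‖Complex.exp z - (1 + z + z ^ 2 / 2)‖ ≤ ‖z‖ ^ 3 := by
  have hbound := Complex.exp_bound hz (n := 3) (by norm_num)
  norm_num [Finset.sum_range_succ, Nat.factorial] at hbound
  exact hbound.trans (mul_le_of_le_one_right (by positivity) (by norm_num))

theorem norm_saddlePhase_add_le (ha : 0 ≤ a) (hw : 0 ≤ w) (hθ : (w + 1) * |θ| ≤ 1) :
    ‖saddlePhase a w θ + ((a * w * (w + 1) * θ ^ 2 / 2 : ℝ) : ℂ)‖ ≤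
      a * w * (w + 1) ^ 2 * |θ| ^ 3 := by
  have hθ0 := abs_nonneg θ
  set u : ℂ := θ * Complex.I with hu
  set s : ℂ := w * (Complex.exp u - 1) with hs
  have hu_norm : ‖u‖ = |θ| := by simp [hu]
  have hu_sq : u ^ 2 = -(θ : ℂ) ^ 2 := by rw [hu, mul_pow, Complex.I_sq]; ring
  have hu_le : ‖u‖ ≤ 1 := by rw [hu_norm]; nlinarith
  have hw_norm : ‖(w : ℂ)‖ = w := Complex.norm_of_nonneg hw
  have hexp_sub_one : ‖Complex.exp u - 1‖ ≤ |θ| := by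
    simpa [hu, mul_comm] using Real.norm_exp_I_mul_ofReal_sub_one_le (x := θ)
  have hs_norm : ‖s‖ ≤ w * |θ| := by
    rw [hs, norm_mul, hw_norm]
    gcongr
  have hs_le : ‖s‖ ≤ 1 := by nlinarith
  have hcubic_s : ‖Complex.exp s - (1 + s + s ^ 2 / 2)‖ ≤ (w * |θ|) ^ 3 :=
    (norm_exp_sub_quadratic_le hs_le).trans (by gcongr)
  have hcubic_u : ‖(w : ℂ) * (Complex.exp u - (1 + u + u ^ 2 / 2))‖ ≤ w * |θ| ^ 3 := by
    rw [norm_mul, hw_norm, ← hu_norm]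
    gcongr
    exact norm_exp_sub_quadratic_le hu_le
  have hcross : ‖(w : ℂ) ^ 2 / 2 * ((Complex.exp u - 1 - u) * (Complex.exp u - 1 + u))‖ ≤
      w ^ 2 / 2 * (|θ| ^ 2 * (|θ| + |θ|)) := by
    have hlin : ‖Complex.exp u - 1 - u‖ ≤ |θ| ^ 2 := by
      simpa [hu_norm] using Complex.norm_exp_sub_one_sub_id_le hu_le
    have hsum : ‖Complex.exp u - 1 + u‖ ≤ |θ| + |θ| :=
      (norm_add_le _ _).trans (add_le_add hexp_sub_one hu_norm.le)
    rw [norm_mul, norm_mul, norm_div, norm_pow, hw_norm, Complex.norm_ofNat]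
    gcongr
  -- The last summand is `(s ^ 2 - (w * u) ^ 2) / 2`.
  have hsplit : saddlePhase a w θ + ((a * w * (w + 1) * θ ^ 2 / 2 : ℝ) : ℂ) =
      a * ((Complex.exp s - (1 + s + s ^ 2 / 2)) + w * (Complex.exp u - (1 + u + u ^ 2 / 2))
        + w ^ 2 / 2 * ((Complex.exp u - 1 - u) * (Complex.exp u - 1 + u))) := by
    rw [saddlePhase, ← hu, ← hs, hs]
    push_cast
    linear_combination (a * w * (w + 1) / 2 : ℂ) * hu_sq + (a * w : ℂ) * hu
  rw [hsplit, norm_mul, Complex.norm_of_nonneg ha]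
  calc a * _ ≤ a * ((w * |θ|) ^ 3 + w * |θ| ^ 3 + w ^ 2 / 2 * (|θ| ^ 2 * (|θ| + |θ|))) := by
        gcongr
        exact norm_add₃_le.trans (by gcongr)
    _ = a * w * (w ^ 2 + w + 1) * |θ| ^ 3 := by ring
    _ ≤ a * w * (w + 1) ^ 2 * |θ| ^ 3 := by gcongr; nlinarith

theorem re_saddlePhase (a w θ : ℝ) : (saddlePhase a w θ).re =
    -(a * (1 - Real.exp (-(w * (1 - Real.cos θ))) * Real.cos (w * Real.sin θ))) := by
  have hexponent : (w : ℂ) * (Complex.exp (θ * Complex.I) - 1) =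
      ((-(w * (1 - Real.cos θ)) : ℝ) : ℂ) + ((w * Real.sin θ : ℝ) : ℂ) * Complex.I := by
    rw [Complex.exp_mul_I]
    push_cast
    ring
  have him : ((a : ℂ) * w * θ * Complex.I).re = 0 := by simp
  rw [saddlePhase, Complex.sub_re, him, Complex.re_ofReal_mul, Complex.sub_re, hexponent,
    Complex.exp_add, ← Complex.ofReal_exp, Complex.re_ofReal_mul, Complex.exp_ofReal_mul_I_re,
    Complex.one_re]
  ring

theorem exp_neg_le_one_sub_half {u : ℝ} (hu0 : 0 ≤ u) (hu1 : u ≤ 1) :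
    Real.exp (-u) ≤ 1 - u / 2 := by
  calc Real.exp (-u) ≤ (1 + u)⁻¹ := by
        rw [Real.exp_neg]
        gcongr
        linarith [Real.add_one_le_exp u]
    _ ≤ 1 - u / 2 := by
        rw [inv_le_iff_one_le_mul₀ (by positivity)]
        nlinarith

theorem half_le_one_sub_exp_neg_mul_cos {u : ℝ} (v : ℝ) (hu0 : 0 ≤ u) (hu : u ≤ 1 / 2) :
    (u + (1 - Real.cos v)) / 2 ≤ 1 - Real.exp (-u) * Real.cos v := by
  have hupper := exp_neg_le_one_sub_half hu0 (by linarith)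
  have hlower : 1 / 2 ≤ Real.exp (-u) := by linarith [Real.one_sub_le_exp_neg u]
  nlinarith [Real.cos_le_one v]

theorem re_saddlePhase_le_of_near (ha : 0 ≤ a) (hw : 0 ≤ w) (hθ : (w + 1) * |θ| ≤ 1) :
    (saddlePhase a w θ).re ≤ -(4 / π ^ 4 * (a * w * (w + 1) * θ ^ 2)) := by
  have hpi := Real.pi_gt_three
  have hθ0 := abs_nonneg θ
  have hθ1 : |θ| ≤ 1 := by nlinarith
  have hv : |w * Real.sin θ| ≤ 1 := by
    rw [abs_mul, abs_of_nonneg hw]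
    nlinarith [Real.abs_sin_le_abs (x := θ)]
  have hu0 : 0 ≤ w * (1 - Real.cos θ) := mul_nonneg hw (by linarith [Real.cos_le_one θ])
  have hu : w * (1 - Real.cos θ) ≤ 1 / 2 := by
    nlinarith [Real.one_sub_sq_div_two_le_cos (x := θ), sq_abs θ]
  have hu_lower : w * (2 / π ^ 2 * θ ^ 2) ≤ w * (1 - Real.cos θ) := by
    gcongr
    linarith [Real.cos_le_one_sub_mul_cos_sq (x := θ) (by linarith)]
  have hsin : (2 / π) ^ 2 * θ ^ 2 ≤ Real.sin θ ^ 2 := by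
    rw [← sq_abs θ, ← sq_abs (Real.sin θ), ← mul_pow]
    gcongr
    exact Real.mul_abs_le_abs_sin (by linarith)
  have hv_lower : 2 / π ^ 2 * (w ^ 2 * ((2 / π) ^ 2 * θ ^ 2)) ≤ 1 - Real.cos (w * Real.sin θ) := by
    calc _ ≤ 2 / π ^ 2 * (w * Real.sin θ) ^ 2 := by rw [mul_pow w]; gcongr
      _ ≤ _ := by linarith [Real.cos_le_one_sub_mul_cos_sq (x := w * Real.sin θ) (by linarith)]
  have hpi_sq : 4 / π ^ 4 ≤ 1 / π ^ 2 := by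
    have hfour : 4 ≤ π ^ 2 := by nlinarith
    calc 4 / π ^ 4 ≤ π ^ 2 / π ^ 4 := by gcongr
      _ = 1 / π ^ 2 := by field_simp
  rw [re_saddlePhase]
  refine neg_le_neg ?_
  calc 4 / π ^ 4 * (a * w * (w + 1) * θ ^ 2)
      = a * (4 / π ^ 4 * w * θ ^ 2 + 4 / π ^ 4 * w ^ 2 * θ ^ 2) := by ring
    _ ≤ a * (1 / π ^ 2 * w * θ ^ 2 + 4 / π ^ 4 * w ^ 2 * θ ^ 2) := by gcongr
    _ = a * ((w * (2 / π ^ 2 * θ ^ 2) + 2 / π ^ 2 * (w ^ 2 * ((2 / π) ^ 2 * θ ^ 2))) / 2) := by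
        ring
    _ ≤ a * ((w * (1 - Real.cos θ) + (1 - Real.cos (w * Real.sin θ))) / 2) := by gcongr
    _ ≤ _ := by gcongr; exact half_le_one_sub_exp_neg_mul_cos _ hu0 hu

theorem re_saddlePhase_le_of_far (ha : 0 ≤ a) (hw : 0 ≤ w) (hθ : 1 ≤ (w + 1) * |θ|)
    (hθpi : |θ| ≤ π) : (saddlePhase a w θ).re ≤ -(a * w / (π ^ 2 * (w + 1) ^ 2)) := by
  have hpi := Real.pi_gt_three
  set v := 2 / π ^ 2 * (w / (w + 1) ^ 2) with hv
  have hv1 : v ≤ 1 := by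
    have hleft : 2 / π ^ 2 ≤ 1 := by rw [div_le_one (by positivity)]; nlinarith
    have hright : w / (w + 1) ^ 2 ≤ 1 := by rw [div_le_one (by positivity)]; nlinarith
    exact mul_le_one₀ hleft (by positivity) hright
  have hv_le : v ≤ w * (1 - Real.cos θ) := by
    have hθ_inv : 1 / (w + 1) ≤ |θ| := by rwa [div_le_iff₀' (by positivity)]
    calc v = w * (2 / π ^ 2 * (1 / (w + 1)) ^ 2) := by rw [hv]; field_simp
      _ ≤ w * (2 / π ^ 2 * |θ| ^ 2) := by gcongr
      _ ≤ w * (1 - Real.cos θ) := by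
        rw [sq_abs]
        gcongr
        linarith [Real.cos_le_one_sub_mul_cos_sq hθpi]
  have hexp : Real.exp (-(w * (1 - Real.cos θ))) ≤ 1 - v / 2 :=
    (Real.exp_le_exp.2 (neg_le_neg hv_le)).trans (exp_neg_le_one_sub_half (by positivity) hv1)
  rw [re_saddlePhase]
  refine neg_le_neg ?_
  calc a * w / (π ^ 2 * (w + 1) ^ 2) = a * (v / 2) := by rw [hv]; field_simp
    _ ≤ _ := by
      gcongr
      nlinarith [Real.cos_le_one (w * Real.sin θ), Real.exp_pos (-(w * (1 - Real.cos θ)))]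

theorem one_add_le_mul_exp_of_nonneg {S : ℝ} (hS : 0 ≤ S) :
    1 + S ≤ 48 * π ^ 10 * Real.exp (4 / π ^ 4 * S) := by
  have hone (k : ℕ) : 1 ≤ π ^ k := one_le_pow₀ (by linarith [Real.pi_gt_three])
  have hconst : 48 * π ^ 10 * (4 / π ^ 4) = 192 * π ^ 6 := by field_simp; norm_num
  calc 1 + S ≤ 48 * π ^ 10 * (4 / π ^ 4 * S + 1) := by nlinarith [hone 6, hone 10]
    _ ≤ 48 * π ^ 10 * Real.exp (4 / π ^ 4 * S) := by
      gcongr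
      exact Real.add_one_le_exp _

-- There is no decay in `θ` away from the saddle. Instead `a * w / (w + 1) ^ 2` dominates a power of
-- `saddleScale a w`, so its exponential absorbs the factor `1 + t ^ 2` for every `|t| ≤ π * scale`.
theorem one_add_mul_sq_le_mul_exp (hw : 0 ≤ w) (haw : (w + 1) ^ 3 ≤ a * w) (hθ : |θ| ≤ π) :
    1 + a * w * (w + 1) * θ ^ 2 ≤
      48 * π ^ 10 * Real.exp (a * w / (π ^ 2 * (w + 1) ^ 2)) := by
  have haw0 : 0 ≤ a * w := (by positivity : 0 ≤ (w + 1) ^ 3).trans haw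
  have hθ_sq : θ ^ 2 ≤ π ^ 2 := sq_le_sq.2 (by rwa [abs_of_pos Real.pi_pos])
  set s := a * w / (w + 1) ^ 2 with hs
  have hs1 : 1 ≤ s := by
    rw [hs, one_le_div₀ (by positivity)]
    exact (pow_le_pow_right₀ (by linarith) (by norm_num)).trans haw
  have hscale : a * w * (w + 1) ≤ s ^ 4 := by
    rw [hs, div_pow, le_div_iff₀ (by positivity)]
    calc a * w * (w + 1) * ((w + 1) ^ 2) ^ 4 = a * w * ((w + 1) ^ 3) ^ 3 := by ring
      _ ≤ a * w * (a * w) ^ 3 := by gcongr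
      _ = (a * w) ^ 4 := by ring
  have hexponent : a * w / (π ^ 2 * (w + 1) ^ 2) = s / π ^ 2 := by rw [hs]; field_simp
  rw [hexponent]
  calc 1 + a * w * (w + 1) * θ ^ 2 ≤ π ^ 2 * s ^ 4 + s ^ 4 * π ^ 2 := by
        gcongr
        exact one_le_mul_of_one_le_of_one_le (by nlinarith [Real.pi_gt_three]) (one_le_pow₀ hs1)
    _ = 48 * π ^ 10 * ((s / π ^ 2) ^ 4 / 4 !) := by
        norm_num [Nat.factorial]
        field_simp
        norm_num
    _ ≤ 48 * π ^ 10 * Real.exp (s / π ^ 2) := by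
        gcongr
        exact Real.pow_div_factorial_le_exp _ (by positivity) 4

theorem norm_exp_saddlePhase_le (hw : 0 < w) (haw : (w + 1) ^ 3 ≤ a * w) (hθ : |θ| ≤ π) :
    ‖Complex.exp (saddlePhase a w θ)‖ ≤ 48 * π ^ 10 * (1 + (saddleScale a w * θ) ^ 2)⁻¹ := by
  have ha : 0 ≤ a :=
    (pos_of_mul_pos_left ((by positivity : 0 < (w + 1) ^ 3).trans_le haw) hw.le).le
  have hbound : 1 + a * w * (w + 1) * θ ^ 2 ≤
      48 * π ^ 10 * Real.exp (-(saddlePhase a w θ).re) := by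
    rcases le_total ((w + 1) * |θ|) 1 with hnear | hfar
    · refine (one_add_le_mul_exp_of_nonneg (by positivity)).trans ?_
      gcongr
      exact le_neg.1 (re_saddlePhase_le_of_near ha hw.le hnear)
    · refine (one_add_mul_sq_le_mul_exp hw.le haw hθ).trans ?_
      gcongr
      exact le_neg.1 (re_saddlePhase_le_of_far ha hw.le hfar hθ)
  rwa [Complex.norm_exp, ← div_eq_mul_inv, le_div_iff₀ (by positivity), mul_pow,
    saddleScale_sq ha hw.le, ← le_div_iff₀' (Real.exp_pos _), div_eq_mul_inv, ← Real.exp_neg]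

/-- The integrand `exp (saddlePhase a w θ)` on `[-π, π]` in the variable `t = saddleScale a w * θ`,
extended by zero to the real line. -/
noncomputable def rescaledIntegrand (a w : ℝ) : ℝ → ℂ :=
  (Ioc (-(π * saddleScale a w)) (π * saddleScale a w)).indicator fun t =>
    Complex.exp (saddlePhase a w (t / saddleScale a w))

theorem aestronglyMeasurable_rescaledIntegrand (a w : ℝ) :
    AEStronglyMeasurable (rescaledIntegrand a w) :=
  (Complex.continuous_exp.comp ((continuous_saddlePhase a w).comp
    (continuous_id.div_const _))).aestronglyMeasurable.indicator measurableSet_Ioc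

theorem norm_rescaledIntegrand_le (hw : 0 < w) (haw : (w + 1) ^ 3 ≤ a * w) (t : ℝ) :
    ‖rescaledIntegrand a w t‖ ≤ 48 * π ^ 10 * (1 + t ^ 2)⁻¹ := by
  have ha : 0 < a := pos_of_mul_pos_left ((by positivity : 0 < (w + 1) ^ 3).trans_le haw) hw.le
  have hσ := saddleScale_pos ha hw
  rw [rescaledIntegrand]
  by_cases ht : t ∈ Ioc (-(π * saddleScale a w)) (π * saddleScale a w)
  · have hθ : |t / saddleScale a w| ≤ π := by
      rw [abs_div, abs_of_pos hσ, div_le_iff₀ hσ]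
      exact abs_le.2 ⟨ht.1.le, ht.2⟩
    simpa only [indicator_of_mem ht, mul_div_cancel₀ _ hσ.ne'] using
      norm_exp_saddlePhase_le hw haw hθ
  · rw [indicator_of_notMem ht, norm_zero]
    positivity

end PhaseBounds

section Laplace

theorem smul_integral_neg_eq_integral_indicator {E : Type*} [NormedAddCommGroup E]
    [NormedSpace ℝ E] (f : ℝ → E) {σ r : ℝ} (hσ : 0 < σ) (hr : 0 ≤ r) :
    σ • ∫ θ in -r..r, f θ = ∫ t, (Ioc (-(r * σ)) (r * σ)).indicator (fun t => f (t / σ)) t := by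
  have hle : -(r * σ) ≤ r * σ := neg_le_self (by positivity)
  rw [integral_indicator measurableSet_Ioc, ← intervalIntegral.integral_of_le hle,
    intervalIntegral.integral_comp_div _ hσ.ne', neg_div, mul_div_cancel_right₀ _ hσ.ne']

variable {ι : Type*} {l : Filter ι} {a w : ι → ℝ}

theorem eventually_add_one_pow_le (hw : ∀ᶠ i in l, 0 < w i)
    (haw : Tendsto (fun i => a i * w i / (w i + 1) ^ 3) l atTop) :
    ∀ᶠ i in l, 0 < a i ∧ 0 < w i ∧ (w i + 1) ^ 3 ≤ a i * w i := by
  filter_upwards [hw, haw.eventually_ge_atTop 1] with i hwi hi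
  have hle : (w i + 1) ^ 3 ≤ a i * w i := (one_le_div₀ (by positivity)).1 hi
  exact ⟨pos_of_mul_pos_left ((by positivity : 0 < (w i + 1) ^ 3).trans_le hle) hwi.le, hwi, hle⟩

theorem tendsto_add_one_div_saddleScale (hw : ∀ᶠ i in l, 0 < w i)
    (haw : Tendsto (fun i => a i * w i / (w i + 1) ^ 3) l atTop) :
    Tendsto (fun i => (w i + 1) / saddleScale (a i) (w i)) l (𝓝 0) := by
  have hlim : Tendsto (fun i => √(a i * w i / (w i + 1) ^ 3)⁻¹) l (𝓝 0) := by
    simpa using haw.inv_tendsto_atTop.sqrt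
  have hev := eventually_add_one_pow_le hw haw
  refine squeeze_zero' ?_ ?_ hlim
  · filter_upwards [hw] with i hwi
    exact div_nonneg (by positivity) (Real.sqrt_nonneg _)
  · filter_upwards [hev] with i ⟨ha, hwi, _⟩
    refine Real.le_sqrt_of_sq_le ?_
    rw [div_pow, saddleScale_sq ha.le hwi.le, inv_div,
      div_le_div_iff₀ (by positivity) (by positivity)]
    calc (w i + 1) ^ 2 * (a i * w i) ≤ (w i + 1) ^ 4 * (a i * w i) := by
          gcongr
          · linarith
          · norm_num
      _ = (w i + 1) ^ 3 * (a i * w i * (w i + 1)) := by ring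

theorem eventually_mul_abs_div_saddleScale_le (hw : ∀ᶠ i in l, 0 < w i)
    (haw : Tendsto (fun i => a i * w i / (w i + 1) ^ 3) l atTop) (t : ℝ) :
    ∀ᶠ i in l, (w i + 1) * |t / saddleScale (a i) (w i)| ≤ 1 := by
  have hlim := (tendsto_add_one_div_saddleScale hw haw).mul_const |t|
  rw [zero_mul] at hlim
  filter_upwards [hlim.eventually_le_const one_pos] with i hi
  rwa [abs_div, abs_of_nonneg (a := saddleScale (a i) (w i)) (Real.sqrt_nonneg _),
    mul_div_assoc', mul_div_right_comm]

theorem tendsto_saddlePhase_div_saddleScale (hw : ∀ᶠ i in l, 0 < w i)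
    (haw : Tendsto (fun i => a i * w i / (w i + 1) ^ 3) l atTop) (t : ℝ) :
    Tendsto (fun i => saddlePhase (a i) (w i) (t / saddleScale (a i) (w i))) l
      (𝓝 ((-(1 / 2) * t ^ 2 : ℝ) : ℂ)) := by
  have hlim := (tendsto_add_one_div_saddleScale hw haw).const_mul (|t| ^ 3)
  rw [mul_zero] at hlim
  refine tendsto_iff_norm_sub_tendsto_zero.2
    (squeeze_zero' (Eventually.of_forall fun _ => norm_nonneg _) ?_ hlim)
  filter_upwards [eventually_add_one_pow_le hw haw,
    eventually_mul_abs_div_saddleScale_le hw haw t] with i ⟨ha, hwi, _⟩ hnear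
  have hbound := norm_saddlePhase_add_le ha.le hwi.le hnear
  have hσ := saddleScale_pos ha hwi
  rw [← saddleScale_sq ha.le hwi.le] at hbound
  calc _ = ‖saddlePhase (a i) (w i) (t / saddleScale (a i) (w i)) +
        ((saddleScale (a i) (w i) ^ 2 * (t / saddleScale (a i) (w i)) ^ 2 / 2 : ℝ) : ℂ)‖ := by
        rw [sub_eq_add_neg, ← Complex.ofReal_neg]
        congr 3
        field_simp
    _ ≤ _ := hbound
    _ = saddleScale (a i) (w i) ^ 2 * (w i + 1) * |t / saddleScale (a i) (w i)| ^ 3 := by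
        rw [saddleScale_sq ha.le hwi.le]
        ring
    _ = |t| ^ 3 * ((w i + 1) / saddleScale (a i) (w i)) := by
        rw [abs_div, abs_of_pos hσ]
        field_simp

theorem integral_exp_neg_half_mul_sq :
    ∫ t : ℝ, Complex.exp ((-(1 / 2) * t ^ 2 : ℝ) : ℂ) = (√(2 * π) : ℝ) := by
  simp_rw [← Complex.ofReal_exp]
  rw [integral_complex_ofReal, integral_gaussian, div_div_eq_mul_div, div_one, mul_comm]

theorem tendsto_rescaledIntegrand (hw : ∀ᶠ i in l, 0 < w i)
    (haw : Tendsto (fun i => a i * w i / (w i + 1) ^ 3) l atTop) (t : ℝ) :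
    Tendsto (fun i => rescaledIntegrand (a i) (w i) t) l
      (𝓝 (Complex.exp ((-(1 / 2) * t ^ 2 : ℝ) : ℂ))) := by
  refine ((Complex.continuous_exp.tendsto _).comp
    (tendsto_saddlePhase_div_saddleScale hw haw t)).congr' ?_
  filter_upwards [eventually_add_one_pow_le hw haw,
    eventually_mul_abs_div_saddleScale_le hw haw t] with i ⟨ha, hwi, _⟩ hnear
  have hσ := saddleScale_pos ha hwi
  have habs : |t| < π * saddleScale (a i) (w i) := by
    rw [← div_lt_iff₀ hσ, ← abs_of_pos hσ, ← abs_div]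
    nlinarith [Real.pi_gt_three, abs_nonneg (t / saddleScale (a i) (w i))]
  have ht : t ∈ Ioc (-(π * saddleScale (a i) (w i))) (π * saddleScale (a i) (w i)) :=
    Ioo_subset_Ioc_self (abs_lt.1 habs)
  rw [rescaledIntegrand, indicator_of_mem ht, Function.comp_apply]

theorem tendsto_saddleScale_smul_integral [l.IsCountablyGenerated] (hw : ∀ᶠ i in l, 0 < w i)
    (haw : Tendsto (fun i => a i * w i / (w i + 1) ^ 3) l atTop) :
    Tendsto (fun i => saddleScale (a i) (w i) •
        ∫ θ in -π..π, Complex.exp (saddlePhase (a i) (w i) θ)) l (𝓝 (√(2 * π) : ℝ)) := by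
  have hpos := eventually_add_one_pow_le hw haw
  have hdominated : Tendsto (fun i => ∫ t, rescaledIntegrand (a i) (w i) t) l
      (𝓝 (∫ t : ℝ, Complex.exp ((-(1 / 2) * t ^ 2 : ℝ) : ℂ))) :=
    tendsto_integral_filter_of_dominated_convergence
      (fun t => 48 * π ^ 10 * (1 + t ^ 2)⁻¹)
      (.of_forall fun i => aestronglyMeasurable_rescaledIntegrand (a i) (w i))
      (hpos.mono fun i ⟨_, hwi, hle⟩ => .of_forall fun t => norm_rescaledIntegrand_le hwi hle t)
      (integrable_inv_one_add_sq.const_mul _)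
      (.of_forall fun t => tendsto_rescaledIntegrand hw haw t)
  rw [integral_exp_neg_half_mul_sq] at hdominated
  refine hdominated.congr' ?_
  filter_upwards [hpos] with i ⟨ha, hwi, _⟩
  exact (smul_integral_neg_eq_integral_indicator (fun θ => Complex.exp (saddlePhase (a i) (w i) θ))
    (saddleScale_pos ha hwi) Real.pi_pos.le).symm

end Laplace

theorem Bell_eval_mul_eq_stirlingSeq_mul {x w : ℝ} {n : ℕ} (hw : 0 < w) (hn0 : 0 < n)
    (hn : x * Real.exp w * w = n) :
    (Bell n).eval x * Real.exp (x + n - n / w) * (w / n) ^ n * √(w + 1) =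
      Stirling.stirlingSeq n * (saddleScale (n / w) w •
        ∫ θ in -π..π, Complex.exp (saddlePhase (n / w) w θ)).re / (√2 * π) := by
  have hn0' : (0 : ℝ) < n := by exact_mod_cast hn0
  have ha : x * Real.exp w = n / w := by rw [← hn, mul_div_cancel_right₀ _ hw.ne']
  have hexp : Real.exp (n / w - x) * Real.exp (x + n - n / w) = Real.exp 1 ^ n := by
    rw [← Real.exp_add, ← Real.exp_nat_mul]
    ring_nf
  have hscale : saddleScale (n / w) w = √n * √(w + 1) := by
    rw [saddleScale, div_mul_cancel₀ _ hw.ne', Real.sqrt_mul hn0'.le]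
  have hsqrt : √(2 * n : ℝ) * √2 = 2 * √n := by
    rw [Real.sqrt_mul zero_le_two, mul_right_comm, Real.mul_self_sqrt zero_le_two]
  rw [Bell_eval_eq_integral_saddlePhase hw hn, ha, hscale, Complex.smul_re, smul_eq_mul,
    Stirling.stirlingSeq]
  set J := (∫ θ in -π..π, Complex.exp (saddlePhase (n / w) w θ)).re
  calc _ = n ! * (Real.exp (n / w - x) * Real.exp (x + n - n / w)) / n ^ n *
        (√(w + 1) * J / (2 * π)) := by
        rw [div_pow]
        field_simp
    _ = n ! * Real.exp 1 ^ n / n ^ n * (√n * √(w + 1) * J / (2 * √n * π)) := by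
        rw [hexp]
        field_simp
    _ = _ := by
        rw [← hsqrt, div_pow]
        field_simp

/-- The hypothesis `hgrowth` says that `wₙ = o(n^(1/3))`, which allows `x n` to tend to infinity at
any rate, and to zero at any rate slower than every `exp (-c * n^(1/3))`. -/
theorem bell_asymptotics_general {x : ℕ → ℝ} (hx : ∀ᶠ n in atTop, 0 < x n)
    (hgrowth : Tendsto (fun n : ℕ => n / (LW0 (n / x n) + 1) ^ 3) atTop atTop) :
    Tendsto (fun n : ℕ =>
        (Bell n).eval (x n) * Real.exp (x n + n - n / LW0 (n / x n)) *
          (LW0 (n / x n) / n) ^ n * √(LW0 (n / x n) + 1))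
      atTop (𝓝 1) := by
  have hpos : ∀ᶠ n : ℕ in atTop, 0 < n ∧ 0 < x n ∧ 0 < LW0 (n / x n) := by
    filter_upwards [hx, eventually_gt_atTop 0] with n hxn hn
    exact ⟨hn, hxn, LW0_pos (by positivity)⟩
  have hw : ∀ᶠ n : ℕ in atTop, 0 < LW0 (n / x n) := hpos.mono fun n hn => hn.2.2
  have haw : Tendsto (fun n : ℕ => n / LW0 (n / x n) * LW0 (n / x n) / (LW0 (n / x n) + 1) ^ 3)
      atTop atTop :=
    hgrowth.congr' (hw.mono fun n hwn => by simp only [div_mul_cancel₀ _ hwn.ne'])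
  have hint := (Complex.continuous_re.tendsto _).comp (tendsto_saddleScale_smul_integral hw haw)
  have hlim := (Stirling.tendsto_stirlingSeq_sqrt_pi.mul hint).div_const (√2 * π)
  have hone : √π * √(2 * π) / (√2 * π) = 1 := by
    rw [Real.sqrt_mul zero_le_two, mul_left_comm, Real.mul_self_sqrt Real.pi_pos.le,
      div_self (by positivity)]
  rw [Complex.ofReal_re, hone] at hlim
  refine hlim.congr' ?_
  filter_upwards [hpos] with n ⟨hn, hxn, hwn⟩
  refine (Bell_eval_mul_eq_stirlingSeq_mul hwn hn ?_).symm
  rw [mul_assoc, mul_comm (Real.exp _), LW0_mul_exp_LW0 (by positivity), mul_div_cancel₀ _ hxn.ne']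

end SaddlePoint

/-- For fixed `x > 0`, with `wₙ = LW₀(n/x)`,
`Bₙ(x) ~ exp(n/wₙ + n·ln(n/wₙ) − (x+n))·(wₙ+1)^{−1/2}` as `n → ∞`; that is,
`Bₙ(x)·exp(x + n − n/wₙ)·(wₙ/n)ⁿ·√(wₙ+1) → 1`. -/
theorem bell_asymptotics (x : ℝ) (hx : 0 < x) :
    Filter.Tendsto (fun n : ℕ =>
        (Bell n).eval x * Real.exp (x + n - n / LW0 (n / x)) *
          (LW0 (n / x) / n) ^ n * Real.sqrt (LW0 (n / x) + 1))
      Filter.atTop (nhds 1) :=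
  bell_asymptotics_general (.of_forall fun _ => hx)
    (tendsto_natCast_div_LW0_add_one_pow_atTop hx 3)
end

section
/- Let B_n(x) be the Bell polynomials and fix c > 0. Let w = LW₀(1/c), i.e., the unique w > 0 with w·e^w = 1/c. Then B_n(c·n)·exp(c·n + n − n/w)·(w/n)^n·√(w + 1) → 1 as n → ∞. -/
open Asymptotics Complex Filter MeasureTheory Metric Polynomial Set
open scoped Nat Real Topology

theorem circleAverage_eq_setIntegral_Ioc_neg_pi_pi {E : Type*} [NormedAddCommGroup E]
    [NormedSpace ℝ E] (f : ℂ → E) (c : ℂ) (R : ℝ) :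
    Real.circleAverage f c R = (2 * π)⁻¹ • ∫ θ in Ioc (-π) π, f (circleMap c R θ) := by
  rw [Real.circleAverage_eq_integral_add (-π),
    intervalIntegral.integral_comp_add_right (fun θ ↦ f (circleMap c R θ)),
    intervalIntegral.integral_of_le (by linarith [Real.pi_pos])]
  ring_nf

theorem iteratedDeriv_eq_factorial_smul_circleAverage {E : Type*} [NormedAddCommGroup E]
    [NormedSpace ℂ E] [CompleteSpace E] {f : ℂ → E} {c : ℂ} {R : ℝ} (hR : 0 < R)
    (hf : DiffContOnCl ℂ f (ball c R)) (n : ℕ) :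
    iteratedDeriv n f c =
      (n ! : ℂ) • Real.circleAverage (fun z ↦ ((z - c) ^ n)⁻¹ • f z) c R := by
  have hfac : (n ! : ℂ) ≠ 0 := Nat.cast_ne_zero.2 n.factorial_ne_zero
  have hpow (z : ℂ) : (z - c)⁻¹ • ((z - c) ^ n)⁻¹ • f z = (1 / (z - c) ^ (n + 1)) • f z := by
    rw [smul_smul, pow_succ', one_div, mul_inv]
  simp only [Real.circleAverage_eq_circleIntegral hR.ne', hpow,
    hf.circleIntegral_one_div_sub_center_pow_smul hR n, smul_smul]
  match_scalars
  field_simp [two_pi_I_ne_zero]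

theorem isLittleO_sub_taylor_two {E : Type*} [NormedAddCommGroup E] [NormedSpace ℝ E] {f : ℝ → E}
    (hf : ContDiff ℝ 2 f) (x₀ : ℝ) :
    (fun x ↦ f x - (f x₀ + (x - x₀) • deriv f x₀ + ((x - x₀) ^ 2 / 2) • deriv (deriv f) x₀))
      =o[𝓝 x₀] fun x ↦ (x - x₀) ^ 2 := by
  refine (taylor_isLittleO_univ hf).congr_left fun x ↦ ?_
  simp only [taylorWithinEval_succ, taylor_within_zero_eval, iteratedDerivWithin_univ,
    iteratedDeriv_succ, iteratedDeriv_zero]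
  norm_num [div_eq_inv_mul]

section Laplace

variable {h : ℝ → ℂ} {S : Set ℝ} {a : ℂ} {δ : ℝ}

theorem tendsto_mul_comp_div_sqrt
    (hh : (fun θ : ℝ ↦ h θ + a * θ ^ 2) =o[𝓝 0] fun θ : ℝ ↦ θ ^ 2) (s : ℝ) :
    Tendsto (fun t : ℝ ↦ t * h (s / √t)) atTop (𝓝 (-a * s ^ 2)) := by
  have hscale : Tendsto (fun t : ℝ ↦ s / √t) atTop (𝓝 0) :=
    Real.tendsto_sqrt_atTop.const_div_atTop s
  have hsq : ∀ᶠ t : ℝ in atTop, t * (s / √t) ^ 2 = s ^ 2 := by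
    filter_upwards [eventually_gt_atTop 0] with t ht
    rw [div_pow, Real.sq_sqrt ht.le, mul_div_cancel₀ _ ht.ne']
  have hcast : (fun t : ℝ ↦ (t : ℂ)) =O[atTop] fun t : ℝ ↦ t := isBigO_of_le _ fun t ↦ by simp
  have herror : (fun t : ℝ ↦ (t : ℂ) * (h (s / √t) + a * (s / √t : ℝ) ^ 2)) =o[atTop]
      fun _ ↦ s ^ 2 :=
    (hcast.mul_isLittleO (hh.comp_tendsto hscale)).congr' .rfl hsq
  have hzero := (isLittleO_one_iff ℝ).1 (herror.trans_isBigO (isBigO_const_const _ one_ne_zero _))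
  have hlim := hzero.sub_const (a * s ^ 2)
  rw [zero_sub, ← neg_mul] at hlim
  refine hlim.congr' ?_
  filter_upwards [hsq] with t ht
  rw [← ofReal_pow s, ← ht]
  push_cast
  ring

theorem norm_indicator_cexp_mul_div_sqrt_le (hre : ∀ θ ∈ S, (h θ).re ≤ -δ * θ ^ 2) {t : ℝ}
    (ht : 0 < t) (s : ℝ) :
    ‖S.indicator (fun θ ↦ cexp (t * h θ)) (s / √t)‖ ≤ Real.exp (-δ * s ^ 2) := by
  by_cases hs : s / √t ∈ S
  · rw [indicator_of_mem hs, norm_exp, re_ofReal_mul, Real.exp_le_exp]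
    calc t * (h (s / √t)).re ≤ t * (-δ * (s / √t) ^ 2) := by gcongr; exact hre _ hs
      _ = -δ * s ^ 2 := by rw [div_pow, Real.sq_sqrt ht.le]; field_simp
  · rw [indicator_of_notMem hs, norm_zero]
    positivity

/-- **Laplace's method**: after the substitution `θ = s / √t` the integrand converges pointwise to
one Gaussian and is dominated by another. -/
theorem tendsto_sqrt_mul_setIntegral_cexp_mul (hS : MeasurableSet S) (hS₀ : S ∈ 𝓝 0)
    (hmeas : AEStronglyMeasurable h (volume.restrict S)) (hδ : 0 < δ)
    (hre : ∀ θ ∈ S, (h θ).re ≤ -δ * θ ^ 2)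
    (hh : (fun θ : ℝ ↦ h θ + a * θ ^ 2) =o[𝓝 0] fun θ : ℝ ↦ θ ^ 2) :
    Tendsto (fun t : ℝ ↦ √t * ∫ θ in S, cexp (t * h θ)) atTop
      (𝓝 (∫ s : ℝ, cexp (-a * s ^ 2))) := by
  have hrescale (t : ℝ) : ∫ s : ℝ, S.indicator (fun θ ↦ cexp (t * h θ)) (s / √t) =
      √t * ∫ θ in S, cexp (t * h θ) := by
    rw [Measure.integral_comp_div, abs_of_nonneg (Real.sqrt_nonneg t), integral_indicator hS,
      real_smul]
  simp only [← hrescale]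
  refine tendsto_integral_filter_of_dominated_convergence (fun s ↦ Real.exp (-δ * s ^ 2))
    ?_ ?_ (integrable_exp_neg_mul_sq hδ) (.of_forall fun s ↦ ?_)
  · filter_upwards [eventually_gt_atTop 0] with t ht
    have hind : AEStronglyMeasurable (S.indicator fun θ ↦ cexp (t * h θ)) :=
      (aestronglyMeasurable_indicator_iff hS).2 <|
        continuous_exp.comp_aestronglyMeasurable (hmeas.const_mul _)
    simpa only [Function.comp_def, smul_eq_mul, inv_mul_eq_div] using
      hind.comp_quasiMeasurePreserving (Measure.quasiMeasurePreserving_smul volume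
        (inv_ne_zero (Real.sqrt_pos.2 ht).ne'))
  · filter_upwards [eventually_gt_atTop 0] with t ht
    exact .of_forall (norm_indicator_cexp_mul_div_sqrt_le hre ht)
  · refine ((continuous_exp.tendsto _).comp (tendsto_mul_comp_div_sqrt hh s)).congr' ?_
    filter_upwards [(Real.tendsto_sqrt_atTop.const_div_atTop s).eventually hS₀] with t ht
    rw [indicator_of_mem ht, Function.comp_apply]

end Laplace

theorem iteratedDeriv_cexp_mul_cexp_sub_one (x : ℂ) (n : ℕ) :
    iteratedDeriv n (fun z ↦ cexp (x * (cexp z - 1))) =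
      fun z ↦ aeval (x * cexp z) (Bell n) * cexp (x * (cexp z - 1)) := by
  induction n with
  | zero => simp [Bell]
  | succ n ih =>
    rw [iteratedDeriv_succ, ih]
    ext z
    have hpoly := ((Bell n).hasDerivAt_aeval (x * cexp z)).comp z
      ((hasDerivAt_exp z).const_mul x)
    have hexp := (((hasDerivAt_exp z).sub_const 1).const_mul x).cexp
    refine (hpoly.mul hexp).deriv.trans ?_
    simp only [Function.comp_apply, Bell, map_mul, map_add, aeval_X]
    ring

theorem aeval_bell_eq_factorial_mul_circleAverage (x : ℂ) {R : ℝ} (hR : 0 < R) (n : ℕ) :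
    aeval x (Bell n) =
      n ! * Real.circleAverage (fun z ↦ (z ^ n)⁻¹ * cexp (x * (cexp z - 1))) 0 R := by
  have hentire : Differentiable ℂ fun z ↦ cexp (x * (cexp z - 1)) := by fun_prop
  simpa [iteratedDeriv_cexp_mul_cexp_sub_one] using
    iteratedDeriv_eq_factorial_smul_circleAverage (c := 0) hR hentire.diffContOnCl n

/-- The phase in the Cauchy integral for `(Bell n).eval (c * n)` over the circle of radius `w`,
parametrized by the angle `θ` and normalized to vanish at `θ = 0`. -/
noncomputable def bellPhase (c w θ : ℝ) : ℂ :=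
  c * (cexp (circleMap 0 w θ) - cexp w) - θ * I

theorem contDiff_bellPhase (c w : ℝ) {n : WithTop ℕ∞} : ContDiff ℝ n (bellPhase c w) := by
  have hcast : ContDiff ℝ n fun θ : ℝ ↦ (θ : ℂ) := ofRealCLM.contDiff
  have hcircle : ContDiff ℝ n (circleMap 0 w) := contDiff_circleMap 0 w
  unfold bellPhase
  fun_prop

theorem bellPhase_zero (c w : ℝ) : bellPhase c w 0 = 0 := by
  simp [bellPhase, circleMap_zero]

theorem deriv_bellPhase (c w : ℝ) :
    deriv (bellPhase c w) =
      fun θ ↦ (c * (circleMap 0 w θ * cexp (circleMap 0 w θ)) - 1) * I := by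
  ext θ
  have hcircle := ((hasDerivAt_circleMap 0 w θ).cexp.sub_const (cexp w)).const_mul (c : ℂ)
  have hlinear := (ofRealCLM.hasDerivAt (x := θ)).mul_const I
  refine (hcircle.sub hlinear).deriv.trans ?_
  simp only [ofRealCLM_apply, ofReal_one]
  ring

theorem deriv_deriv_bellPhase_zero (c w : ℝ) :
    deriv (deriv (bellPhase c w)) 0 = -(c * (w * cexp w) * (w + 1)) := by
  have hcircle := hasDerivAt_circleMap 0 w 0
  rw [deriv_bellPhase]
  refine ((((hcircle.mul hcircle.cexp).const_mul (c : ℂ)).sub_const 1).mul_const I).deriv.trans ?_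
  simp only [circleMap_zero, ofReal_zero, zero_mul, Complex.exp_zero, mul_one]
  linear_combination (c * (w * cexp w) * (w + 1)) * I_sq

theorem isLittleO_bellPhase_add_sq {c w : ℝ} (hsaddle : c * (w * Real.exp w) = 1) :
    (fun θ : ℝ ↦ bellPhase c w θ + ((w + 1) / 2 : ℝ) * θ ^ 2) =o[𝓝 0] fun θ : ℝ ↦ θ ^ 2 := by
  have hsaddle' : (c : ℂ) * (w * cexp w) = 1 := mod_cast congrArg ofReal hsaddle
  have hderiv : deriv (bellPhase c w) 0 = 0 := by
    simp [deriv_bellPhase, circleMap_zero, hsaddle']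
  have htaylor := isLittleO_sub_taylor_two (contDiff_bellPhase c w) 0
  simp only [bellPhase_zero, hderiv, deriv_deriv_bellPhase_zero, hsaddle'] at htaylor
  refine htaylor.congr (fun θ ↦ ?_) (fun θ ↦ by simp)
  simp only [real_smul]
  push_cast
  ring

theorem exp_mul_cos_le {w θ : ℝ} (hw : 0 ≤ w) (hθ : |θ| ≤ π) :
    Real.exp (w * Real.cos θ) ≤ Real.exp w - w * Real.exp (-w) * (2 / π ^ 2) * θ ^ 2 := by
  have hcos : 2 / π ^ 2 * θ ^ 2 ≤ 1 - Real.cos θ := by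
    linarith [Real.cos_le_one_sub_mul_cos_sq hθ]
  have hlow : -w ≤ w * Real.cos θ := by nlinarith [Real.neg_one_le_cos θ]
  have htangent : w * (1 - Real.cos θ) ≤ Real.exp (w * (1 - Real.cos θ)) - 1 := by
    linarith [Real.add_one_le_exp (w * (1 - Real.cos θ))]
  have hgap : Real.exp (-w) * (w * (2 / π ^ 2 * θ ^ 2)) ≤
      Real.exp w - Real.exp (w * Real.cos θ) := by
    calc Real.exp (-w) * (w * (2 / π ^ 2 * θ ^ 2))
        ≤ Real.exp (w * Real.cos θ) * (w * (1 - Real.cos θ)) := by gcongr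
      _ ≤ Real.exp (w * Real.cos θ) * (Real.exp (w * (1 - Real.cos θ)) - 1) := by gcongr
      _ = Real.exp w - Real.exp (w * Real.cos θ) := by
        rw [mul_sub_one, ← Real.exp_add]
        ring_nf
  linarith

theorem re_bellPhase_le {c w θ : ℝ} (hc : 0 ≤ c) (hw : 0 ≤ w) (hθ : |θ| ≤ π) :
    (bellPhase c w θ).re ≤ -(c * (w * Real.exp (-w) * (2 / π ^ 2))) * θ ^ 2 := by
  have hnorm : (cexp (circleMap 0 w θ)).re ≤ Real.exp (w * Real.cos θ) :=
    (re_le_norm _).trans_eq (by rw [norm_exp, circleMap_zero_re])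
  calc (bellPhase c w θ).re = c * ((cexp (circleMap 0 w θ)).re - Real.exp w) := by
        simp [bellPhase, ← ofReal_exp]
    _ ≤ c * (-(w * Real.exp (-w) * (2 / π ^ 2)) * θ ^ 2) := by
        gcongr
        linarith [exp_mul_cos_le hw hθ]
    _ = -(c * (w * Real.exp (-w) * (2 / π ^ 2))) * θ ^ 2 := by ring

theorem tendsto_sqrt_mul_setIntegral_cexp_bellPhase {c w : ℝ} (hc : 0 < c) (hw : 0 < w)
    (hsaddle : c * (w * Real.exp w) = 1) :
    Tendsto (fun t : ℝ ↦ √t * ∫ θ in Ioc (-π) π, cexp (t * bellPhase c w θ)) atTop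
      (𝓝 (√(2 * π / (w + 1)) : ℝ)) := by
  rw [mul_comm, ← div_div_eq_mul_div, ← integral_gaussian, ← integral_complex_ofReal]
  push_cast
  refine tendsto_sqrt_mul_setIntegral_cexp_mul measurableSet_Ioc
    (Ioc_mem_nhds (by linarith [Real.pi_pos]) Real.pi_pos)
    (contDiff_bellPhase c w (n := 0)).continuous.aestronglyMeasurable
    (δ := c * (w * Real.exp (-w) * (2 / π ^ 2))) (by positivity)
    (fun θ hθ ↦ re_bellPhase_le hc.le hw.le (abs_le.2 ⟨hθ.1.le, hθ.2⟩)) ?_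
  simpa using isLittleO_bellPhase_add_sq hsaddle

theorem bell_eval_eq_setIntegral_bellPhase (c : ℝ) {w : ℝ} (hw : 0 < w) (n : ℕ) :
    (((Bell n).eval (c * n) : ℝ) : ℂ) =
      n ! / (2 * π * w ^ n) * cexp (c * n * (cexp w - 1)) *
        ∫ θ in Ioc (-π) π, cexp (n * bellPhase c w θ) := by
  have hw' : (w : ℂ) ≠ 0 := ofReal_ne_zero.2 hw.ne'
  have hintegrand (θ : ℝ) :
      (circleMap 0 w θ ^ n)⁻¹ * cexp ((c * n : ℝ) * (cexp (circleMap 0 w θ) - 1)) =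
        (w ^ n : ℂ)⁻¹ * cexp (c * n * (cexp w - 1)) * cexp (n * bellPhase c w θ) := by
    have hpow : (circleMap 0 w θ ^ n)⁻¹ = (w ^ n : ℂ)⁻¹ * cexp (-(n * (θ * I))) := by
      rw [circleMap_zero, mul_pow, ← exp_nat_mul, mul_inv, exp_neg]
    rw [hpow, mul_assoc, mul_assoc, ← Complex.exp_add, ← Complex.exp_add, bellPhase]
    push_cast
    ring_nf
  have haeval : (((Bell n).eval (c * n) : ℝ) : ℂ) = aeval ((c * n : ℝ) : ℂ) (Bell n) :=
    Polynomial.ofReal_eval _ _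
  rw [haeval, aeval_bell_eq_factorial_mul_circleAverage _ hw,
    circleAverage_eq_setIntegral_Ioc_neg_pi_pi]
  simp only [hintegrand, integral_const_mul, real_smul]
  push_cast
  field_simp

theorem bell_eval_mul_eq_stirlingSeq_mul (c : ℝ) {w : ℝ} (hw : 0 < w) {n : ℕ} (hn : n ≠ 0) :
    (((Bell n).eval (c * n) * Real.exp (c * n + n - c * Real.exp w * n) * (w / n) ^ n : ℝ) : ℂ) =
      Stirling.stirlingSeq n * (√n * ∫ θ in Ioc (-π) π, cexp (n * bellPhase c w θ)) /
        (√2 * π : ℝ) := by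
  have hexp : cexp (c * n * (cexp w - 1)) * cexp (c * n + n - c * cexp w * n) = cexp 1 ^ n := by
    rw [← Complex.exp_add, ← exp_nat_mul]
    ring_nf
  have hw' : (w : ℂ) ≠ 0 := ofReal_ne_zero.2 hw.ne'
  have hsqrt_n : (√n : ℂ) ≠ 0 := ofReal_ne_zero.2 (by positivity)
  have hsqrt_two : (√2 : ℂ) ≠ 0 := ofReal_ne_zero.2 (by positivity)
  have hsqrt_two_sq : (√2 : ℂ) ^ 2 = 2 := mod_cast Real.sq_sqrt zero_le_two
  push_cast [bell_eval_eq_setIntegral_bellPhase c hw, Stirling.stirlingSeq,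
    Real.sqrt_mul zero_le_two]
  rw [div_pow, div_pow, ← hexp]
  field_simp
  rw [hsqrt_two_sq]
  ring

/-- For fixed `c > 0` and `w = LW₀(1/c)` (the unique `w > 0` with `w·e^w = 1/c`),
`Bₙ(c·n)·exp(c·n + n − n/w)·(w/n)ⁿ·√(w+1) → 1` as `n → ∞`. -/
theorem bell_asymptotics_on_ray (c w : ℝ) (hc : 0 < c) (hw : 0 < w)
    (hwc : w * Real.exp w = 1 / c) :
    Filter.Tendsto (fun n : ℕ =>
        (Bell n).eval (c * n) * Real.exp (c * n + n - n / w) *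
          (w / n) ^ n * Real.sqrt (w + 1))
      Filter.atTop (nhds 1) := by
  have hsaddle : c * (w * Real.exp w) = 1 := by rw [hwc, mul_one_div_cancel hc.ne']
  have hstirling := (continuous_ofReal.tendsto _).comp Stirling.tendsto_stirlingSeq_sqrt_pi
  have hlaplace := (tendsto_sqrt_mul_setIntegral_cexp_bellPhase hc hw hsaddle).comp
    tendsto_natCast_atTop_atTop
  have hlim := ((hstirling.mul hlaplace).div_const ((√2 * π : ℝ) : ℂ)).mul_const (√(w + 1) : ℂ)
  have hconst : √π * √(2 * π / (w + 1)) / (√2 * π) * √(w + 1) = 1 := by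
    rw [Real.sqrt_div (by positivity), Real.sqrt_mul zero_le_two]
    field_simp
    exact Real.sq_sqrt Real.pi_pos.le
  rw [← ofReal_mul, ← ofReal_div, ← ofReal_mul, hconst] at hlim
  have hcw : c * Real.exp w = 1 / w := by
    rw [eq_div_iff hw.ne']
    linarith
  rw [← tendsto_ofReal_iff]
  refine hlim.congr' ?_
  filter_upwards [eventually_ne_atTop 0] with n hn
  have hform := bell_eval_mul_eq_stirlingSeq_mul c hw hn
  rw [hcw, one_div_mul_eq_div] at hform
  rw [ofReal_mul _ (√(w + 1)), hform]
  simp only [Function.comp_apply, ofReal_natCast]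
end
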